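/- Let H be a partial mixed graph and M a completion of H. Suppose ⟨S_1, K_1, K_2, …, K_m, S_2⟩ (m ≥ 1) is an uncovered path in H such that the mark at K_1 on the edge S_1–K_1 is a circle, every mark on each edge K_j–K_{j+1} (1 ≤ j ≤ m−1) is a circle, and the mark at K_m on the edge K_m–S_2 is a circle. Then in M every vertex K_j (1 ≤ j ≤ m) is an ancestor of S_1 or an ancestor of S_2. -/

import Mathlib

/-- Marks at edge ends in a partial mixed graph. -/
inductive Mark : Type
  | tail
  | arrow
  | circle
deriving DecidableEq

/-- A partial mixed graph (PMG): a symmetric irreflexive adjacency relation together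
with, for each ordered pair `(a, b)` of adjacent vertices, a mark `mark a b` at `b` on
the edge `a–b`, such that no edge has tails at both endpoints. -/
structure PMG (V : Type) where
  adj : V → V → Prop
  symm : ∀ a b, adj a b → adj b a
  irrefl : ∀ a, ¬ adj a a
  mark : V → V → Mark
  noDoubleTail : ∀ a b, adj a b → ¬ (mark a b = Mark.tail ∧ mark b a = Mark.tail)

namespace PMG

variable {V : Type}

/-- `a → b`: adjacent, tail at `a`, arrowhead at `b`. -/
def dir (G : PMG V) (a b : V) : Prop :=
  G.adj a b ∧ G.mark b a = Mark.tail ∧ G.mark a b = Mark.arrow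

/-- `a ↔ b`: adjacent, arrowheads at both endpoints. -/
def bidir (G : PMG V) (a b : V) : Prop :=
  G.adj a b ∧ G.mark b a = Mark.arrow ∧ G.mark a b = Mark.arrow

/-- `a` is an ancestor of `b`: `a = b` or there is a directed path from `a` to `b`. -/
def Anc (G : PMG V) (a b : V) : Prop :=
  Relation.ReflTransGen G.dir a b

/-- `a` is an ancestor of some vertex of the set `S`. -/
def AncSet (G : PMG V) (a : V) (S : Set V) : Prop :=
  ∃ v ∈ S, G.Anc a v

/-- A mixed graph: a PMG with no circle marks. -/
def IsMixed (G : PMG V) : Prop :=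
  ∀ a b, G.adj a b → G.mark a b ≠ Mark.circle

/-- Ancestral: no directed cycles and no almost directed cycles. -/
def Ancestral (G : PMG V) : Prop :=
  ∀ a b, G.Anc a b → a ≠ b → ¬ G.dir b a ∧ ¬ G.bidir a b

/-- Unshielded collider `(a, b, c)`: `a, c` both adjacent to `b`, `a` and `c`
distinct and nonadjacent, arrowheads at `b` on both edges. -/
def UnshieldedCollider (G : PMG V) (a b c : V) : Prop :=
  a ≠ c ∧ G.adj a b ∧ G.adj c b ∧ ¬ G.adj a c ∧
    G.mark a b = Mark.arrow ∧ G.mark c b = Mark.arrow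

/-- `M` is a completion of the PMG `H`: same vertices and adjacencies, all non-circle
marks of `H` occur identically in `M`, `M` is an ancestral mixed graph, and every
unshielded collider of `M` is already an unshielded collider of `H`. -/
def Completion (H M : PMG V) : Prop :=
  (∀ a b, M.adj a b ↔ H.adj a b) ∧
  (∀ a b, H.adj a b → H.mark a b ≠ Mark.circle → M.mark a b = H.mark a b) ∧
  M.IsMixed ∧ M.Ancestral ∧
  (∀ a b c, M.UnshieldedCollider a b c → H.UnshieldedCollider a b c)

/-- An edge usable in a possible directed path from `a` to `b`:
adjacent, no arrowhead at `a`, no tail at `b`. -/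
def possEdge (G : PMG V) (a b : V) : Prop :=
  G.adj a b ∧ G.mark b a ≠ Mark.arrow ∧ G.mark a b ≠ Mark.tail

/-- A circle edge: adjacent with circle marks at both endpoints. -/
def circleEdge (G : PMG V) (a b : V) : Prop :=
  G.adj a b ∧ G.mark a b = Mark.circle ∧ G.mark b a = Mark.circle

/-- `p 0, …, p n` is a path: distinct vertices, consecutive ones adjacent. -/
def IsPathOn (G : PMG V) (p : ℕ → V) (n : ℕ) : Prop :=
  (∀ i ≤ n, ∀ j ≤ n, p i = p j → i = j) ∧ ∀ i < n, G.adj (p i) (p (i+1))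

/-- `p 0, …, p n` is a possible directed path. -/
def IsPossDirPathOn (G : PMG V) (p : ℕ → V) (n : ℕ) : Prop :=
  (∀ i ≤ n, ∀ j ≤ n, p i = p j → i = j) ∧ ∀ i < n, G.possEdge (p i) (p (i+1))

/-- `p 0, …, p n` is a circle path. -/
def IsCirclePathOn (G : PMG V) (p : ℕ → V) (n : ℕ) : Prop :=
  (∀ i ≤ n, ∀ j ≤ n, p i = p j → i = j) ∧ ∀ i < n, G.circleEdge (p i) (p (i+1))

/-- The path `p 0, …, p n` is uncovered: any two nonconsecutive neighbours of an
internal vertex are nonadjacent. -/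
def UncoveredOn (G : PMG V) (p : ℕ → V) (n : ℕ) : Prop :=
  ∀ i, i + 2 ≤ n → ¬ G.adj (p i) (p (i+2))

/-- `F_x` relative to `V'`: the vertices of `V'` adjacent to `x` whose edge carries
a circle or an arrowhead at `x`. -/
def Fset (G : PMG V) (V' : Set V) (x : V) : Set V :=
  {v | v ∈ V' ∧ G.adj v x ∧ (G.mark v x = Mark.circle ∨ G.mark v x = Mark.arrow)}

/-- `p 0, …, p n` is an unbridged path relative to `V'` in `G`: an uncovered circle
path with at least one edge, lying in `G[−V']`, with
`F_{p 0} \ F_{p 1} ≠ ∅` and `F_{p n} \ F_{p (n-1)} ≠ ∅`. -/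
def UnbridgedOn (G : PMG V) (V' : Set V) (p : ℕ → V) (n : ℕ) : Prop :=
  1 ≤ n ∧ G.IsCirclePathOn p n ∧ G.UncoveredOn p n ∧
  (∀ i ≤ n, p i ∉ V') ∧
  (G.Fset V' (p 0) \ G.Fset V' (p 1)).Nonempty ∧
  (G.Fset V' (p n) \ G.Fset V' (p (n-1))).Nonempty

/-- The set `S_A`: `A` together with all vertices adjacent to `A` whose edge has an
arrowhead at `A`. -/
def SA (G : PMG V) (A : V) : Set V :=
  {A} ∪ {v | G.adj v A ∧ G.mark v A = Mark.arrow}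

end PMG

/-!
If an internal vertex of the path is not a collider in the mixed graph `M`, one of its two path
edges has a tail at it, hence leaves it. Following such an edge, the next vertex is entered by an
arrowhead and is again not a collider, so the path must leave it on the other side: the direction
propagates until an endpoint is reached. A circle of `H` at an internal vertex of an uncovered path
guarantees that the completion does not create a collider there, since it would be unshielded
and new.
-/

namespace PMG

variable {V : Type} {H M : PMG V} {p : ℕ → V} {n i j : ℕ}

theorem IsMixed.dir_of_mark_ne_arrow (hM : M.IsMixed) {a b : V} (hab : M.adj a b)
    (ha : M.mark b a ≠ Mark.arrow) : M.dir a b := by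
  have hba := M.symm a b hab
  have tail_at_a : M.mark b a = Mark.tail := by
    cases h : M.mark b a
    · rfl
    · exact absurd h ha
    · exact absurd h (hM b a hba)
  have arrow_at_b : M.mark a b = Mark.arrow := by
    cases h : M.mark a b
    · exact absurd ⟨h, tail_at_a⟩ (M.noDoubleTail a b hab)
    · rfl
    · exact absurd h (hM a b hab)
  exact ⟨hab, tail_at_a, arrow_at_b⟩

/-- `p 0, …, p n` is a walk none of whose internal vertices is a collider, shielded or not.
Vertices may repeat: the propagation of edge directions along the walk is purely local. -/
def IsColliderFreeWalkOn (G : PMG V) (p : ℕ → V) (n : ℕ) : Prop :=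
  (∀ i < n, G.adj (p i) (p (i + 1))) ∧
  ∀ i, i + 2 ≤ n →
    ¬ (G.mark (p i) (p (i + 1)) = Mark.arrow ∧ G.mark (p (i + 2)) (p (i + 1)) = Mark.arrow)

namespace IsColliderFreeWalkOn

theorem dir_succ_of_mark_eq_arrow (hp : M.IsColliderFreeWalkOn p n) (hM : M.IsMixed)
    (hi : i + 2 ≤ n) (h : M.mark (p i) (p (i + 1)) = Mark.arrow) :
    M.dir (p (i + 1)) (p (i + 2)) :=
  hM.dir_of_mark_ne_arrow (hp.1 (i + 1) hi) fun h' => hp.2 i hi ⟨h, h'⟩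

theorem dir_pred_of_mark_eq_arrow (hp : M.IsColliderFreeWalkOn p n) (hM : M.IsMixed)
    (hi : i + 2 ≤ n) (h : M.mark (p (i + 2)) (p (i + 1)) = Mark.arrow) :
    M.dir (p (i + 1)) (p i) :=
  hM.dir_of_mark_ne_arrow (M.symm _ _ (hp.1 i (by omega))) fun h' => hp.2 i hi ⟨h', h⟩

theorem anc_last_of_dir_succ (hp : M.IsColliderFreeWalkOn p n) (hM : M.IsMixed)
    (hj : j < n) (h : M.dir (p j) (p (j + 1))) : M.Anc (p j) (p n) := by
  have hdir : ∀ k, j ≤ k → k < n → M.dir (p k) (p (k + 1)) := by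
    intro k hjk
    induction k, hjk using Nat.le_induction with
    | base => exact fun _ => h
    | succ k _ ih => exact fun hk => hp.dir_succ_of_mark_eq_arrow hM hk (ih (by omega)).2.2
  exact (reflTransGen_of_succ_of_le (fun a b => M.dir (p a) (p b))
    (fun k hk => hdir k hk.1 hk.2) hj.le).lift p fun _ _ => id

theorem anc_zero_of_dir_pred (hp : M.IsColliderFreeWalkOn p n) (hM : M.IsMixed)
    (hj : j + 1 ≤ n) (h : M.dir (p (j + 1)) (p j)) : M.Anc (p (j + 1)) (p 0) := by
  induction j with
  | zero => exact .single h
  | succ k ih =>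
    exact .head h (ih (by omega) (hp.dir_pred_of_mark_eq_arrow hM hj h.2.2))

theorem anc_zero_or_anc_last (hp : M.IsColliderFreeWalkOn p n) (hM : M.IsMixed) (hj : j ≤ n) :
    M.Anc (p j) (p 0) ∨ M.Anc (p j) (p n) := by
  obtain rfl | hjn := hj.eq_or_lt
  · exact .inr .refl
  by_cases harrow : M.mark (p (j + 1)) (p j) = Mark.arrow
  · left
    cases j with
    | zero => exact .refl
    | succ i => exact hp.anc_zero_of_dir_pred hM hj (hp.dir_pred_of_mark_eq_arrow hM hjn harrow)
  · exact .inr (hp.anc_last_of_dir_succ hM hjn (hM.dir_of_mark_ne_arrow (hp.1 j hjn) harrow))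

end IsColliderFreeWalkOn

theorem UncoveredOn.isColliderFreeWalkOn (hunc : M.UncoveredOn p n) (hpath : M.IsPathOn p n)
    (hcol : ∀ i, i + 2 ≤ n → ¬ M.UnshieldedCollider (p i) (p (i + 1)) (p (i + 2))) :
    M.IsColliderFreeWalkOn p n := by
  refine ⟨hpath.2, fun i hi ⟨hleft, hright⟩ => hcol i hi ?_⟩
  have hne : p i ≠ p (i + 2) := fun h => by
    have := hpath.1 i (by omega) (i + 2) hi h
    omega
  exact ⟨hne, hpath.2 i (by omega), M.symm _ _ (hpath.2 (i + 1) hi), hunc i hi, hleft, hright⟩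

end PMG

theorem circle_core_ancestor_of_endpoint_general {V : Type} {H M : PMG V}
    (hadj : ∀ a b, M.adj a b ↔ H.adj a b) (hM : M.IsMixed)
    (hcol : ∀ a b c, M.UnshieldedCollider a b c → H.UnshieldedCollider a b c)
    {p : ℕ → V} {n : ℕ} (hpath : H.IsPathOn p n) (hunc : H.UncoveredOn p n)
    (hp : ∀ i, i + 2 ≤ n → ¬ H.UnshieldedCollider (p i) (p (i + 1)) (p (i + 2)))
    {j : ℕ} (hj : j ≤ n) : M.Anc (p j) (p 0) ∨ M.Anc (p j) (p n) := by
  have hpathM : M.IsPathOn p n := ⟨hpath.1, fun i hi => (hadj _ _).2 (hpath.2 i hi)⟩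
  have huncM : M.UncoveredOn p n := fun i hi h => hunc i hi ((hadj _ _).1 h)
  have hwalk : M.IsColliderFreeWalkOn p n :=
    huncM.isColliderFreeWalkOn hpathM fun i hi h => hp i hi (hcol _ _ _ h)
  exact hwalk.anc_zero_or_anc_last hM hj

/-- Let `M` be a completion of the PMG `H`. If `⟨S_1, K_1, …, K_m, S_2⟩` (`m ≥ 1`,
with `S_1 = p 0`, `K_j = p j`, `S_2 = p (m+1)`) is an uncovered path in `H` with a
circle at `K_1` on the edge `S_1–K_1`, all circle marks on the edges `K_j–K_{j+1}`,
and a circle at `K_m` on the edge `K_m–S_2`, then in `M` every `K_j` is an ancestor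
of `S_1` or of `S_2`. -/
theorem circle_core_ancestor_of_endpoint {V : Type} (H M : PMG V)
    (hHM : PMG.Completion H M)
    (p : ℕ → V) (m : ℕ) (hm : 1 ≤ m)
    (hpath : H.IsPathOn p (m+1)) (hunc : H.UncoveredOn p (m+1))
    (hS1 : H.mark (p 0) (p 1) = Mark.circle)
    (hmid : ∀ j, 1 ≤ j → j + 1 ≤ m → H.circleEdge (p j) (p (j+1)))
    (hS2 : H.mark (p (m+1)) (p m) = Mark.circle) :
    ∀ j, 1 ≤ j → j ≤ m → M.Anc (p j) (p 0) ∨ M.Anc (p j) (p (m+1)) := by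
  obtain ⟨hadj, -, hM, -, hcol⟩ := hHM
  have hcircle : ∀ i, i + 2 ≤ m + 1 → H.mark (p i) (p (i + 1)) = Mark.circle
    | 0, _ => hS1
    | i + 1, hi => (hmid (i + 1) (by omega) (by omega)).2.1
  exact fun j _ hj => circle_core_ancestor_of_endpoint_general hadj hM hcol hpath hunc
    (fun i hi h => by simpa [hcircle i hi] using h.2.2.2.2.1) (by omega)
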